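/- Let p,q be positive integers such that p/q is not the square of a rational number. Then the period of the regular continued fraction expansion of √(p/q) is either of odd length and palindromic, or bipalindromic. -/

import Mathlib

/-- Iterates of the Gauss map starting from `ξ`. -/
noncomputable def gaussIter (ξ : ℝ) : ℕ → ℝ
  | 0 => ξ
  | n + 1 => 1 / (gaussIter ξ n - (⌊gaussIter ξ n⌋ : ℝ))

/-- The `n`-th partial quotient of the regular continued fraction expansion of `ξ`. -/
noncomputable def cfTerm (ξ : ℝ) (n : ℕ) : ℤ := ⌊gaussIter ξ n⌋

/-- The continued fraction expansion of `ξ` is periodic with period length `P` from index `N`. -/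
def IsEventuallyPeriodicCF (ξ : ℝ) (N P : ℕ) : Prop :=
  1 ≤ P ∧ ∀ j : ℕ, cfTerm ξ (N + j + P) = cfTerm ξ (N + j)

/-- `s` is the (minimal) period of the eventually periodic regular continued fraction
expansion of `ξ`; it is well defined up to cyclic permutation. -/
def IsCFPeriod (s : List ℤ) (ξ : ℝ) : Prop :=
  s ≠ [] ∧
  (∃ N : ℕ, ∀ j : ℕ, cfTerm ξ (N + j) = s.getD (j % s.length) 0) ∧
  (∀ P : ℕ, 1 ≤ P → (∃ N : ℕ, IsEventuallyPeriodicCF ξ N P) → s.length ≤ P)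

/-- A finite sequence is palindromic if some cyclic permutation of it equals its reversal. -/
def Palindromic (s : List ℤ) : Prop := ∃ t : List ℤ, List.IsRotated s t ∧ t.reverse = t

/-- A finite sequence is bipalindromic if some cyclic permutation of it is the concatenation
of two palindrome blocks each of odd length. -/
def Bipalindromic (s : List ℤ) : Prop :=
  ∃ u v : List ℤ, List.IsRotated s (u ++ v) ∧ Odd u.length ∧ Odd v.length ∧
    u.reverse = u ∧ v.reverse = v

/-! Let `ξ > 1` be a quadratic irrational with conjugate `ξ' < 0`, let `a` be its sequence of
partial quotients and let `w n` be the negated conjugate of the `n`-th complete quotient.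
Conjugating `ξ (n + 1) = 1 / (ξ n - a n)` gives `1 / w (n + 1) = a n + w n` with `0 < w n < 1` for
`n ≥ 1`, so the Gauss map applied to `1 / w n` reads the partial quotients backwards. Hence a period
which occurs far out in the expansion propagates back to index `1`, and `w (L + 1) = w 1` for every
period length `L`. If moreover `ξ + ξ'` is an integer, as for `ξ = √d`, then
`1 / w (L + 1) = 1 / w 1 = a 0 - ξ'` has the same fractional part as `ξ`, so the partial quotients
read backwards from `a (L - 1)` are those read forwards from `a 1`: `a (L - k) = a k` for
`0 < k < L`. If `L` is even, `a 1, …, a (L - 1)` and `a L` are the two palindromes of odd length; if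
`L` is odd, the rotation centred at `a L` is a palindrome. If `d < 1`, then `√(1/d)` is the first
Gauss iterate of `√d`. -/

section PeriodicSequences

variable {α : Type*} {b : ℕ → α}

theorem isRotated_map_range'_of_periodic {L : ℕ} (hb : Function.Periodic b L) (m n : ℕ) :
    List.IsRotated ((List.range' m L).map b) ((List.range' n L).map b) := by
  have succ (m : ℕ) : List.IsRotated ((List.range' m L).map b) ((List.range' (m + 1) L).map b) := by
    cases L with
    | zero => rfl
    | succ L =>
      rw [List.range'_succ, List.range'_1_concat, List.map_append, List.map_cons,
        List.map_singleton, add_assoc, add_comm 1 L, hb m]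
      exact ⟨1, by simp⟩
  have from_zero (m : ℕ) : List.IsRotated ((List.range' 0 L).map b) ((List.range' m L).map b) := by
    induction m with
    | zero => rfl
    | succ m ih => exact ih.trans (succ m)
  exact (from_zero m).symm.trans (from_zero n)

theorem reverse_map_range'_eq_self {m n : ℕ} (h : ∀ i j, i + j + 1 = n → b (m + i) = b (m + j)) :
    ((List.range' m n).map b).reverse = (List.range' m n).map b := by
  refine List.ext_getElem (by simp) fun i _ hi => ?_
  simp only [List.length_map, List.length_range'] at hi
  simpa using h (n - 1 - i) i (by omega)

end PeriodicSequences

section RepeatedBlocks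

variable {L : ℕ} {b : ℕ → ℤ} {s : List ℤ}

theorem bipalindromic_of_reflection (hL : Even L) (hL0 : L ≠ 0)
    (hrefl : ∀ i j, i + j + 2 = L → b i = b j)
    (hs : List.IsRotated s ((List.range' 0 L).map b)) : Bipalindromic s := by
  obtain ⟨M, rfl⟩ := Nat.exists_eq_succ_of_ne_zero hL0
  refine ⟨(List.range' 0 M).map b, [b M], ?_, ?_, odd_one, ?_, rfl⟩
  · simpa [List.range'_1_concat] using hs
  · simpa [Nat.even_add_one] using hL
  · exact reverse_map_range'_eq_self fun i j hij => by simpa using hrefl i j (by omega)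

theorem palindromic_of_reflection (hL : Odd L) (hb : Function.Periodic b L)
    (hrefl : ∀ i j, i + j + 2 = L → b i = b j)
    (hs : List.IsRotated s ((List.range' 0 L).map b)) : Palindromic s := by
  obtain ⟨m, rfl⟩ := hL
  refine ⟨_, hs.trans (isRotated_map_range'_of_periodic hb 0 m),
    reverse_map_range'_eq_self fun i j hij => ?_⟩
  wlog hle : i ≤ j generalizing i j
  · exact (this j i (by omega) (by omega)).symm
  obtain rfl | hlt := hle.eq_or_lt
  · rfl
  · have hj : m + j = (j - m - 1) + (2 * m + 1) := by omega
    rw [hj, hb]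
    exact hrefl _ _ (by omega)

/-- The sequence `a` consists, from some index on, of repetitions of the nonempty block `s`. In
contrast to `IsCFPeriod`, the block need not be of minimal length. -/
def EventuallyRepeats (a : ℕ → ℤ) (s : List ℤ) : Prop :=
  s ≠ [] ∧ ∃ N : ℕ, ∀ j : ℕ, a (N + j) = s.getD (j % s.length) 0

namespace EventuallyRepeats

variable {a : ℕ → ℤ}

theorem comp_succ (h : EventuallyRepeats a s) : EventuallyRepeats (fun n => a (n + 1)) s := by
  obtain ⟨hs, N, hN⟩ := h
  have hpos : 0 < s.length := List.length_pos_iff.2 hs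
  refine ⟨hs, N + (s.length - 1), fun j => ?_⟩
  have hidx : N + (s.length - 1) + j + 1 = N + (j + s.length) := by omega
  simp only [hidx, hN, Nat.add_mod_right]

theorem exists_forall_add_length (h : EventuallyRepeats a s) :
    ∃ N, ∀ n, a (N + n + s.length) = a (N + n) := by
  obtain ⟨-, N, hN⟩ := h
  exact ⟨N, fun n => by rw [add_assoc, hN, hN, Nat.add_mod_right]⟩

theorem exists_eq_map_range' (h : EventuallyRepeats a s) :
    ∃ N, s = (List.range' N s.length).map a := by
  obtain ⟨-, N, hN⟩ := h
  refine ⟨N, List.ext_getElem (by simp) fun i hi _ => ?_⟩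
  simp [hN, Nat.mod_eq_of_lt hi, hi]

end EventuallyRepeats

theorem palindromic_or_bipalindromic_of_reflection (h : EventuallyRepeats b s)
    (hb : Function.Periodic b s.length) (hrefl : ∀ i j, i + j + 2 = s.length → b i = b j) :
    (Odd s.length ∧ Palindromic s) ∨ Bipalindromic s := by
  obtain ⟨N, hN⟩ := h.exists_eq_map_range'
  have hrot : List.IsRotated s ((List.range' 0 s.length).map b) := by
    conv_lhs => rw [hN]
    exact isRotated_map_range'_of_periodic hb N 0
  rcases s.length.even_or_odd with heven | hodd
  · exact .inr (bipalindromic_of_reflection heven (List.length_pos_iff.2 h.1).ne' hrefl hrot)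
  · exact .inl ⟨hodd, palindromic_of_reflection hodd hb hrefl hrot⟩

end RepeatedBlocks

section GaussMap

variable {ξ η : ℝ}

theorem gaussIter_succ (ξ : ℝ) (n : ℕ) : gaussIter ξ (n + 1) = (Int.fract (gaussIter ξ n))⁻¹ :=
  one_div _

theorem gaussIter_add (ξ : ℝ) (m n : ℕ) : gaussIter ξ (m + n) = gaussIter (gaussIter ξ m) n := by
  induction n with
  | zero => rfl
  | succ n ih => rw [← add_assoc, gaussIter_succ, gaussIter_succ, ih]

theorem cfTerm_add (ξ : ℝ) (m n : ℕ) : cfTerm ξ (m + n) = cfTerm (gaussIter ξ m) n :=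
  congrArg Int.floor (gaussIter_add ξ m n)

theorem cfTerm_succ_congr (h : Int.fract ξ = Int.fract η) (n : ℕ) :
    cfTerm ξ (n + 1) = cfTerm η (n + 1) := by
  have h1 : gaussIter ξ 1 = gaussIter η 1 := by
    rw [gaussIter_succ, gaussIter_succ, gaussIter, gaussIter, h]
  rw [add_comm n 1, cfTerm_add, cfTerm_add, h1]

theorem irrational_gaussIter (h : Irrational ξ) (n : ℕ) : Irrational (gaussIter ξ n) := by
  induction n with
  | zero => exact h
  | succ n ih =>
    rw [gaussIter_succ]
    exact (ih.sub_intCast _).inv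

theorem one_lt_gaussIter_succ (h : Irrational ξ) (n : ℕ) : 1 < gaussIter ξ (n + 1) := by
  rw [gaussIter_succ]
  exact (one_lt_inv₀ (Int.fract_pos.2 ((irrational_gaussIter h n).ne_int _))).2 (Int.fract_lt_one _)

theorem one_le_cfTerm (h : Irrational ξ) (h1 : 1 < ξ) (n : ℕ) : 1 ≤ cfTerm ξ n := by
  have hn : 1 < gaussIter ξ n := by
    cases n with
    | zero => exact h1
    | succ n => exact one_lt_gaussIter_succ h n
  exact Int.le_floor.2 (by exact_mod_cast hn.le)

theorem genContFract_of_s_get? (h : Irrational ξ) (n : ℕ) :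
    (GenContFract.of ξ).s.get? n = some ⟨1, (cfTerm ξ (n + 1) : ℝ)⟩ := by
  have hone : gaussIter ξ 1 = (Int.fract ξ)⁻¹ := gaussIter_succ ξ 0
  induction n generalizing ξ with
  | zero =>
    rw [zero_add, cfTerm, hone]
    exact GenContFract.of_s_head (Int.fract_pos.2 (h.ne_int _)).ne'
  | succ n ih =>
    rw [GenContFract.of_s_succ, ← hone, ih (irrational_gaussIter h 1) (gaussIter_succ _ 0),
      ← cfTerm_add, add_comm 1]

theorem eq_of_cfTerm_eq (hξ : Irrational ξ) (hη : Irrational η)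
    (h : ∀ n, cfTerm ξ n = cfTerm η n) : ξ = η := by
  have hof : GenContFract.of ξ = GenContFract.of η := by
    refine GenContFract.ext ?_ (Stream'.Seq.ext fun n => ?_)
    · exact congrArg ((↑) : ℤ → ℝ) (h 0)
    · rw [genContFract_of_s_get? hξ, genContFract_of_s_get? hη, h]
  refine tendsto_nhds_unique (GenContFract.of_convergence ξ) ?_
  rw [hof]
  exact GenContFract.of_convergence η

theorem gaussIter_eq_of_cfTerm_periodic {N L : ℕ} (hξ : Irrational ξ)
    (h : ∀ n, cfTerm ξ (N + n + L) = cfTerm ξ (N + n)) (n : ℕ) :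
    gaussIter ξ (N + n + L) = gaussIter ξ (N + n) := by
  refine eq_of_cfTerm_eq (irrational_gaussIter hξ _) (irrational_gaussIter hξ _) fun k => ?_
  rw [← cfTerm_add, ← cfTerm_add, add_right_comm, add_assoc N, h]

end GaussMap

section ReversedContinuedFraction

/-- The value `1 / (a (n - 1) + 1 / (a (n - 2) + ⋯ + 1 / (a 0 + θ)))` of a continued fraction read
backwards from index `n - 1`. For the partial quotients `a` of a quadratic irrational with conjugate
`-θ` it is the negated conjugate of the `n`-th complete quotient, see
`exists_map_eq_gaussIter_and_revCF`. -/
noncomputable def revCF (a : ℕ → ℤ) (θ : ℝ) : ℕ → ℝ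
  | 0 => θ
  | n + 1 => (a n + revCF a θ n)⁻¹

variable {a : ℕ → ℤ} {θ : ℝ}

theorem revCF_pos (ha : ∀ n, 1 ≤ a n) (hθ : 0 < θ) (n : ℕ) : 0 < revCF a θ n := by
  induction n with
  | zero => exact hθ
  | succ n ih =>
    have han : (0 : ℝ) < a n := by exact_mod_cast ha n
    exact inv_pos.2 (add_pos han ih)

theorem revCF_succ_lt_one (ha : ∀ n, 1 ≤ a n) (hθ : 0 < θ) (n : ℕ) : revCF a θ (n + 1) < 1 := by
  have han : (1 : ℝ) ≤ a n := by exact_mod_cast ha n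
  exact inv_lt_one_of_one_lt₀ (lt_add_of_le_of_pos han (revCF_pos ha hθ n))

theorem inv_revCF_succ (a : ℕ → ℤ) (θ : ℝ) (n : ℕ) :
    (revCF a θ (n + 1))⁻¹ = a n + revCF a θ n :=
  inv_inv _

theorem fract_revCF_succ (ha : ∀ n, 1 ≤ a n) (hθ : 0 < θ) (n : ℕ) :
    Int.fract (revCF a θ (n + 1)) = revCF a θ (n + 1) :=
  Int.fract_eq_self.2 ⟨(revCF_pos ha hθ _).le, revCF_succ_lt_one ha hθ n⟩

theorem gaussIter_inv_revCF (ha : ∀ n, 1 ≤ a n) (hθ : 0 < θ) (m k : ℕ) :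
    gaussIter (revCF a θ (m + 1 + k))⁻¹ k = (revCF a θ (m + 1))⁻¹ := by
  induction k generalizing m with
  | zero => rfl
  | succ k ih =>
    rw [gaussIter_succ, add_comm k 1, ← add_assoc, ih (m + 1), inv_revCF_succ,
      Int.fract_intCast_add, fract_revCF_succ ha hθ]

theorem cfTerm_inv_revCF (ha : ∀ n, 1 ≤ a n) (hθ : 0 < θ) (m k : ℕ) :
    cfTerm (revCF a θ (m + 2 + k))⁻¹ k = a (m + 1) := by
  rw [cfTerm, gaussIter_inv_revCF ha hθ (m + 1) k, inv_revCF_succ, Int.floor_intCast_add,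
    Int.floor_eq_zero_iff.2 ⟨(revCF_pos ha hθ _).le, revCF_succ_lt_one ha hθ m⟩, add_zero]

theorem revCF_eq_of_revCF_add_eq (ha : ∀ n, 1 ≤ a n) (hθ : 0 < θ) {m n k : ℕ}
    (h : revCF a θ (m + 1 + k) = revCF a θ (n + 1 + k)) :
    revCF a θ (m + 1) = revCF a θ (n + 1) := by
  rw [← inv_inj, ← gaussIter_inv_revCF ha hθ m k, h, gaussIter_inv_revCF ha hθ]

theorem periodic_of_revCF_periodic (ha : ∀ n, 1 ≤ a n) (hθ : 0 < θ) {L : ℕ}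
    (h : ∀ n, revCF a θ (n + 1 + L) = revCF a θ (n + 1)) :
    Function.Periodic (fun n => a (n + 1)) L := fun n => by
  have hshift : revCF a θ (n + L + 2) = revCF a θ (n + 2) := by
    rw [add_right_comm]
    exact h (n + 1)
  have hterm (m : ℕ) : a (m + 1) = cfTerm (revCF a θ (m + 2))⁻¹ 0 :=
    (cfTerm_inv_revCF ha hθ m 0).symm
  simp only [hterm, hshift]

theorem cfTerm_reflection {ξ : ℝ} (ha : ∀ n, 1 ≤ cfTerm ξ n) (hθ : 0 < θ)
    (hfract : Int.fract θ = Int.fract ξ) {i j : ℕ}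
    (hper : revCF (cfTerm ξ) θ (i + j + 2 + 1) = revCF (cfTerm ξ) θ 1) :
    cfTerm ξ (i + 1) = cfTerm ξ (j + 1) := by
  have hfract' : Int.fract ξ = Int.fract (revCF (cfTerm ξ) θ 1)⁻¹ := by
    rw [inv_revCF_succ, Int.fract_intCast_add, revCF, hfract]
  calc cfTerm ξ (i + 1) = cfTerm (revCF (cfTerm ξ) θ 1)⁻¹ (i + 1) := cfTerm_succ_congr hfract' i
    _ = cfTerm (revCF (cfTerm ξ) θ (j + 2 + (i + 1)))⁻¹ (i + 1) := by
      rw [← hper]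
      congr 3
      omega
    _ = cfTerm ξ (j + 1) := cfTerm_inv_revCF ha hθ j (i + 1)

end ReversedContinuedFraction

section Conjugation

variable {K : Type*} [Field K] (φ ψ : K →+* ℝ) (ω : K)

theorem exists_map_eq_gaussIter_and_revCF (n : ℕ) :
    ∃ x : K, φ x = gaussIter (φ ω) n ∧ ψ x = -revCF (cfTerm (φ ω)) (-ψ ω) n := by
  induction n with
  | zero => exact ⟨ω, rfl, (neg_neg _).symm⟩
  | succ n ih =>
    obtain ⟨x, hφ, hψ⟩ := ih
    refine ⟨(x - cfTerm (φ ω) n)⁻¹, ?_, ?_⟩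
    · rw [map_inv₀, map_sub, map_intCast, hφ, gaussIter_succ]
      rfl
    · rw [map_inv₀, map_sub, map_intCast, hψ, revCF, ← inv_neg, neg_add_rev, sub_eq_add_neg]

theorem revCF_eq_of_gaussIter_eq {m n : ℕ} (h : gaussIter (φ ω) m = gaussIter (φ ω) n) :
    revCF (cfTerm (φ ω)) (-ψ ω) m = revCF (cfTerm (φ ω)) (-ψ ω) n := by
  obtain ⟨x, hxφ, hxψ⟩ := exists_map_eq_gaussIter_and_revCF φ ψ ω m
  obtain ⟨y, hyφ, hyψ⟩ := exists_map_eq_gaussIter_and_revCF φ ψ ω n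
  have hxy : x = y := φ.injective (by rw [hxφ, hyφ, h])
  rw [← neg_inj, ← hxψ, ← hyψ, hxy]

variable {φ ψ ω}

theorem revCF_periodic_of_cfTerm_periodic (hirr : Irrational (φ ω)) (hφ : 1 < φ ω) (hψ : ψ ω < 0)
    {N L : ℕ} (hper : ∀ n, cfTerm (φ ω) (N + n + L) = cfTerm (φ ω) (N + n)) (m : ℕ) :
    revCF (cfTerm (φ ω)) (-ψ ω) (m + 1 + L) = revCF (cfTerm (φ ω)) (-ψ ω) (m + 1) := by
  have hfar := revCF_eq_of_gaussIter_eq φ ψ ω (gaussIter_eq_of_cfTerm_periodic hirr hper (m + 1))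
  have hshift : revCF (cfTerm (φ ω)) (-ψ ω) (m + L + 1 + N) =
      revCF (cfTerm (φ ω)) (-ψ ω) (m + 1 + N) := by
    convert hfar using 2 <;> omega
  rw [add_right_comm]
  exact revCF_eq_of_revCF_add_eq (one_le_cfTerm hirr hφ) (neg_pos.2 hψ) hshift

theorem palindromic_or_bipalindromic_of_conj (hirr : Irrational (φ ω)) (hφ : 1 < φ ω)
    (hψ : ψ ω < 0) (hfract : Int.fract (-ψ ω) = Int.fract (φ ω)) {s : List ℤ}
    (h : EventuallyRepeats (cfTerm (φ ω)) s) :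
    (Odd s.length ∧ Palindromic s) ∨ Bipalindromic s := by
  have ha := one_le_cfTerm hirr hφ
  have hθ : 0 < -ψ ω := neg_pos.2 hψ
  obtain ⟨N, hN⟩ := h.exists_forall_add_length
  have hper := revCF_periodic_of_cfTerm_periodic hirr hφ hψ hN
  refine palindromic_or_bipalindromic_of_reflection h.comp_succ
    (periodic_of_revCF_periodic ha hθ hper) fun i j hij => cfTerm_reflection ha hθ hfract ?_
  rw [hij, add_comm]
  exact hper 0

end Conjugation

section SquareRoot

variable {d : ℚ}

theorem exists_conj_embeddings_of_irrational_sqrt (hd : Irrational √(d : ℝ)) :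
    ∃ (K : Type) (_ : Field K) (φ ψ : K →+* ℝ) (ω : K), φ ω = √d ∧ ψ ω = -√d := by
  obtain ⟨hsq, hd0⟩ := irrational_sqrt_ratCast_iff.1 hd
  have : Fact (∀ r : ℚ, r ^ 2 ≠ d + 0 * r) :=
    ⟨fun r hr => hsq ⟨r, by linarith⟩⟩
  have hmul : √(d : ℝ) * √d = d • (1 : ℝ) + (0 : ℚ) • √(d : ℝ) := by
    simp [Real.mul_self_sqrt, Rat.smul_def, hd0]
  refine ⟨QuadraticAlgebra ℚ d 0, inferInstance, (QuadraticAlgebra.lift ⟨√d, hmul⟩).toRingHom,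
    (QuadraticAlgebra.lift ⟨-√d, by simpa using hmul⟩).toRingHom, QuadraticAlgebra.omega, ?_, ?_⟩
    <;> simp [QuadraticAlgebra.lift]

theorem palindromic_or_bipalindromic_of_one_lt_sqrt (hd : Irrational √(d : ℝ)) (h1 : 1 < √(d : ℝ))
    {s : List ℤ} (h : EventuallyRepeats (cfTerm √d) s) :
    (Odd s.length ∧ Palindromic s) ∨ Bipalindromic s := by
  obtain ⟨K, _, φ, ψ, ω, hφ, hψ⟩ := exists_conj_embeddings_of_irrational_sqrt hd
  refine palindromic_or_bipalindromic_of_conj (φ := φ) (ψ := ψ) (ω := ω)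
    (by rwa [hφ]) (by rwa [hφ]) ?_ (by rw [hφ, hψ, neg_neg]) (by rwa [hφ])
  rw [hψ]
  exact neg_lt_zero.2 (zero_lt_one.trans h1)

theorem cfTerm_sqrt_inv (h1 : √(d : ℝ) < 1) (n : ℕ) :
    cfTerm √((d⁻¹ : ℚ) : ℝ) n = cfTerm √d (n + 1) := by
  have hone : gaussIter √(d : ℝ) 1 = √((d⁻¹ : ℚ) : ℝ) := by
    rw [gaussIter_succ, gaussIter, Int.fract_eq_self.2 ⟨Real.sqrt_nonneg _, h1⟩, Rat.cast_inv,
      Real.sqrt_inv]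
  rw [add_comm, cfTerm_add, hone]

theorem statement10_general (hd : Irrational √(d : ℝ)) {s : List ℤ}
    (h : EventuallyRepeats (cfTerm √d) s) :
    (Odd s.length ∧ Palindromic s) ∨ Bipalindromic s := by
  rcases hd.ne_one.lt_or_gt with hlt | hgt
  · have hinv : √((d⁻¹ : ℚ) : ℝ) = (√(d : ℝ))⁻¹ := by rw [Rat.cast_inv, Real.sqrt_inv]
    have hpos : 0 < √(d : ℝ) := (Real.sqrt_nonneg _).lt_of_ne' hd.ne_zero
    refine palindromic_or_bipalindromic_of_one_lt_sqrt (d := d⁻¹) ?_ ?_ ?_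
    · rw [hinv]
      exact hd.inv
    · rw [hinv]
      exact (one_lt_inv₀ hpos).2 hlt
    · rw [funext (cfTerm_sqrt_inv hlt)]
      exact h.comp_succ
  · exact palindromic_or_bipalindromic_of_one_lt_sqrt hd hgt h

end SquareRoot

/-- The continued fraction of `√(p/q)` has period either odd and palindromic, or
bipalindromic. -/
theorem statement10 (p q : ℕ) (hp : 0 < p) (hq : 0 < q)
    (hns : ¬ ∃ r : ℚ, (p : ℚ) / (q : ℚ) = r ^ 2) :
    ∀ s : List ℤ, IsCFPeriod s (Real.sqrt ((p : ℝ) / (q : ℝ))) →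
      (Odd s.length ∧ Palindromic s) ∨ Bipalindromic s := by
  rintro s ⟨hs, hrep, -⟩
  have hirr : Irrational √((p / q : ℚ) : ℝ) :=
    irrational_sqrt_ratCast_iff.2 ⟨fun h => hns ((isSquare_iff_exists_sq _).1 h), by positivity⟩
  exact statement10_general hirr (by push_cast; exact ⟨hs, hrep⟩)
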